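/- Let G(p*) be an infinitesimally bearing rigid target formation in ℝ^d with bearing constraints g* = (g_1*,…,g_m*), centroid p̄* and scale s*. Let p : [0, ∞) → ℝ^{dn} be a differentiable solution of ṗ(t) = (H ⊗ I_d)^T diag(P_{g_1(t)}, …, P_{g_m(t)}) g* with p_i(t) ≠ p_j(t) for every edge and all t ≥ 0, whose initial condition satisfies p̄(0) = p̄*, s(0) = s*, and p(0) ≠ −p* + 2(1_n ⊗ p̄*). Then p(t) converges to p* exponentially fast: there exist constants C ≥ 0 and λ > 0 (depending on the initial condition) such that ‖p(t) − p*‖ ≤ C e^{−λ t} for all t ≥ 0; in particular g_k(t) → g_k* for all k as t → ∞. -/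

import Mathlib

/-- `projL x` is the orthogonal projection matrix
`P_x = I - (x/‖x‖)(x/‖x‖)ᵀ`, i.e. `projL x y = y - ⟪x,y⟫/‖x‖² • x`. -/
noncomputable def projL {d : ℕ} (x : EuclideanSpace ℝ (Fin d)) :
    EuclideanSpace ℝ (Fin d) →ₗ[ℝ] EuclideanSpace ℝ (Fin d) :=
  LinearMap.id - (‖x‖ ^ 2)⁻¹ •
    (LinearMap.toSpanSingleton ℝ (EuclideanSpace ℝ (Fin d)) x ∘ₗ (innerSL ℝ x).toLinearMap)

/-- The bearing rigidity matrix `R(p) = diag(P_{g_k}/‖e_k‖)(H ⊗ I_d)` of the framework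
whose `k`-th oriented edge goes from vertex `(E k).1` to vertex `(E k).2`
(so `e_k = p_{(E k).2} - p_{(E k).1}` and `g_k = e_k/‖e_k‖`), viewed as a linear map
`ℝ^{dn} → ℝ^{dm}`. -/
noncomputable def bearingMap {d n : ℕ} {ι : Type*} (E : ι → Fin n × Fin n)
    (p : Fin n → EuclideanSpace ℝ (Fin d)) :
    (Fin n → EuclideanSpace ℝ (Fin d)) →ₗ[ℝ] (ι → EuclideanSpace ℝ (Fin d)) :=
  LinearMap.pi fun k =>
    (‖p (E k).2 - p (E k).1‖⁻¹ • projL (p (E k).2 - p (E k).1)) ∘ₗ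
      ((LinearMap.proj (R := ℝ) (φ := fun _ : Fin n => EuclideanSpace ℝ (Fin d)) (E k).2) -
       (LinearMap.proj (R := ℝ) (φ := fun _ : Fin n => EuclideanSpace ℝ (Fin d)) (E k).1))

/-- The linear map `w ↦ 1_n ⊗ w` stacking `n` copies of `w ∈ ℝ^d`; its range is
`span{1_n ⊗ I_d}`, the space of translational motions. -/
noncomputable def constLM (d n : ℕ) :
    EuclideanSpace ℝ (Fin d) →ₗ[ℝ] (Fin n → EuclideanSpace ℝ (Fin d)) :=
  LinearMap.pi fun _ => LinearMap.id

/-- The bearing-only control field `(H ⊗ I_d)ᵀ diag(P_{g_1}, …, P_{g_m}) g*` evaluated at a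
configuration `q`: its `i`-th component is `∑_k [H]_{ki} P_{g_k} g*_k`, where `[H]_{ki} = 1`
if `i` is the head `(E k).2` of edge `k`, `-1` if `i` is its tail `(E k).1`, and `0`
otherwise. -/
noncomputable def bearingCtrl {d n m : ℕ} (E : Fin m → Fin n × Fin n)
    (gs : Fin m → EuclideanSpace ℝ (Fin d)) (q : Fin n → EuclideanSpace ℝ (Fin d)) :
    Fin n → EuclideanSpace ℝ (Fin d) :=
  fun i => ∑ k, ((if (E k).2 = i then (1 : ℝ) else 0) - if (E k).1 = i then (1 : ℝ) else 0) •
    projL (q (E k).2 - q (E k).1) (gs k)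

open scoped InnerProductSpace

lemma projL_apply' {d : ℕ} (x y : EuclideanSpace ℝ (Fin d)) :
    projL x y = y - (‖x‖ ^ 2)⁻¹ • (⟪x, y⟫_ℝ • x) := by
  simp [projL]

lemma inner_projL_self {d : ℕ} (x y : EuclideanSpace ℝ (Fin d)) (hx : x ≠ 0) :
    ⟪x, projL x y⟫_ℝ = 0 := by
  have h : ‖x‖ ≠ 0 := norm_ne_zero_iff.mpr hx
  rw [projL_apply', inner_sub_right, real_inner_smul_right, real_inner_smul_right,
    real_inner_self_eq_norm_sq]
  field_simp
  ring

lemma inner_projL' {d : ℕ} (x y : EuclideanSpace ℝ (Fin d)) :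
    ⟪y, projL x y⟫_ℝ = ‖y‖ ^ 2 - (‖x‖ ^ 2)⁻¹ * ⟪x, y⟫_ℝ ^ 2 := by
  rw [projL_apply', inner_sub_right, real_inner_smul_right, real_inner_smul_right,
    real_inner_self_eq_norm_sq, real_inner_comm]
  ring

lemma norm_projL_sq {d : ℕ} (x y : EuclideanSpace ℝ (Fin d)) (hx : x ≠ 0) :
    ‖projL x y‖ ^ 2 = ‖y‖ ^ 2 - (‖x‖ ^ 2)⁻¹ * ⟪x, y⟫_ℝ ^ 2 := by
  rw [← inner_projL', ← real_inner_self_eq_norm_sq]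
  conv_lhs => enter [2]; rw [projL_apply']
  rw [inner_sub_left, real_inner_smul_left, real_inner_smul_left, inner_projL_self x y hx]
  simp

/-- comparison of the edge dissipation with the rigidity map -/
lemma edge_identity {d : ℕ} (e f : EuclideanSpace ℝ (Fin d)) (he : e ≠ 0) (hf : f ≠ 0) :
    ‖‖f‖⁻¹ • projL f e‖ ^ 2 = ((‖f‖ ^ 3)⁻¹ * ‖e‖ ^ 2) * ⟪f, projL e (‖f‖⁻¹ • f)⟫_ℝ := by
  have h : ‖e‖ ≠ 0 := norm_ne_zero_iff.mpr he
  have h' : ‖f‖ ≠ 0 := norm_ne_zero_iff.mpr hf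
  rw [map_smul, real_inner_smul_right, inner_projL', norm_smul, mul_pow, norm_projL_sq f e hf,
    real_inner_comm]
  simp only [norm_inv, norm_norm]
  field_simp

lemma inner_projL_nonneg {d : ℕ} (e f : EuclideanSpace ℝ (Fin d)) (he : e ≠ 0) :
    0 ≤ ⟪f, projL e (‖f‖⁻¹ • f)⟫_ℝ := by
  rw [map_smul, real_inner_smul_right, inner_projL', ← norm_projL_sq e f he]
  positivity

lemma sum_inner_ctrl {d n m : ℕ} (E : Fin m → Fin n × Fin n)
    (gs : Fin m → EuclideanSpace ℝ (Fin d)) (q y : Fin n → EuclideanSpace ℝ (Fin d)) :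
    ∑ i, ⟪y i, bearingCtrl E gs q i⟫_ℝ =
      ∑ k, ⟪y (E k).2 - y (E k).1, projL (q (E k).2 - q (E k).1) (gs k)⟫_ℝ := by
  simp only [bearingCtrl, inner_sum, real_inner_smul_right]
  rw [Finset.sum_comm]
  refine Finset.sum_congr rfl fun k _ => ?_
  simp [sub_mul, ite_mul, Finset.sum_sub_distrib, inner_sub_left]

lemma sum_ctrl {d n m : ℕ} (E : Fin m → Fin n × Fin n)
    (gs : Fin m → EuclideanSpace ℝ (Fin d)) (q : Fin n → EuclideanSpace ℝ (Fin d)) :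
    ∑ i, bearingCtrl E gs q i = 0 := by
  refine ext_inner_left ℝ fun w => ?_
  rw [inner_sum, sum_inner_ctrl E gs q (fun _ => w)]
  simp

lemma decay {f f' : ℝ → ℝ} (κ : ℝ)
    (hf : ∀ t ∈ Set.Ici (0 : ℝ), HasDerivWithinAt f (f' t) (Set.Ici 0) t)
    (h : ∀ t ∈ Set.Ici (0 : ℝ), f' t ≤ -κ * f t) :
    ∀ t ∈ Set.Ici (0 : ℝ), f t ≤ f 0 * Real.exp (-κ * t) := by
  have hg : ∀ t ∈ Set.Ici (0 : ℝ), HasDerivWithinAt (fun s => f s * Real.exp (κ * s))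
      (f' t * Real.exp (κ * t) + f t * (Real.exp (κ * t) * (κ * 1))) (Set.Ici 0) t := fun t ht =>
    (hf t ht).mul (((hasDerivAt_id t).const_mul κ).exp.hasDerivWithinAt)
  have anti := antitoneOn_of_hasDerivWithinAt_nonpos (convex_Ici (0:ℝ))
    (fun t ht => (hg t ht).continuousWithinAt)
    (fun t ht => (hg t (interior_subset ht)).mono interior_subset)
    (fun t ht => by
      have := h t (interior_subset ht)
      have h2 := Real.exp_pos (κ * t)
      nlinarith)
  intro t ht
  have := anti (Set.self_mem_Ici) ht ht
  simp only [mul_zero, Real.exp_zero, mul_one] at this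
  calc f t = (f t * Real.exp (κ * t)) * Real.exp (-κ * t) := by
        rw [mul_assoc, ← Real.exp_add]; simp
    _ ≤ _ := by gcongr

lemma coercive {d n m : ℕ} (hn : 2 ≤ n) (E : Fin m → Fin n × Fin n)
    (pstar : Fin n → EuclideanSpace ℝ (Fin d)) (c : EuclideanSpace ℝ (Fin d))
    (hc : ∑ i, (pstar i - c) = 0) (hS : 0 < ∑ i, ‖pstar i - c‖ ^ 2)
    (hibr : LinearMap.ker (bearingMap E pstar) =
      LinearMap.range (constLM d n) ⊔ Submodule.span ℝ {pstar}) :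
    ∃ K : ℝ, 0 < K ∧ ∀ x : Fin n → EuclideanSpace ℝ (Fin d), ∑ i, x i = 0 →
      ∑ i, ⟪pstar i - c, x i⟫_ℝ = 0 → ∑ i, ‖x i‖ ^ 2 ≤ K * ‖bearingMap E pstar x‖ ^ 2 := by
  let L1 : (Fin n → EuclideanSpace ℝ (Fin d)) →ₗ[ℝ] EuclideanSpace ℝ (Fin d) :=
    ∑ i, LinearMap.proj i
  let L2 : (Fin n → EuclideanSpace ℝ (Fin d)) →ₗ[ℝ] ℝ :=
    ∑ i, (innerSL ℝ (pstar i - c)).toLinearMap ∘ₗ LinearMap.proj i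
  have hL1 : ∀ x, L1 x = ∑ i, x i := fun x => by simp [L1]
  have hL2 : ∀ x, L2 x = ∑ i, ⟪pstar i - c, x i⟫_ℝ := fun x => by
    simp [L2, inner_sub_left]
  have hn0 : (n : ℝ) ≠ 0 := by positivity
  let L := (bearingMap E pstar).prod (L1.prod L2)
  have hker : LinearMap.ker L = ⊥ := by
    rw [LinearMap.ker_eq_bot']
    intro x hx
    have h0 : bearingMap E pstar x = 0 := congrArg Prod.fst hx
    have h1 : L1 x = 0 := congrArg (fun z => z.2.1) hx
    have h2 : L2 x = 0 := congrArg (fun z => z.2.2) hx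
    rw [hL1] at h1
    rw [hL2] at h2
    have hm : x ∈ LinearMap.ker (bearingMap E pstar) := h0
    rw [hibr, Submodule.mem_sup] at hm
    obtain ⟨y, ⟨w, rfl⟩, z, hz, rfl⟩ := hm
    obtain ⟨a, rfl⟩ := Submodule.mem_span_singleton.mp hz
    have hx : ∀ i, (constLM d n w + a • pstar) i = (w + a • c) + a • (pstar i - c) := by
      intro i; simp [constLM, smul_sub]
    simp only [hx] at h1 h2
    rw [Finset.sum_add_distrib, ← Finset.smul_sum, hc] at h1
    simp only [Finset.sum_const, Finset.card_univ, Fintype.card_fin, smul_zero, add_zero] at h1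
    have hw : w + a • c = 0 := by
      rw [← Nat.cast_smul_eq_nsmul ℝ] at h1
      rcases smul_eq_zero.mp h1 with h | h
      · exact absurd h hn0
      · exact h
    simp only [hw, zero_add, real_inner_smul_right, real_inner_self_eq_norm_sq,
      ← Finset.mul_sum] at h2
    have ha : a = 0 := by
      rcases mul_eq_zero.mp h2 with h | h
      · exact h
      · exact absurd h hS.ne'
    funext i
    rw [hx, hw, ha]; simp
  obtain ⟨K, hK, hL⟩ := LinearMap.exists_antilipschitzWith L hker
  refine ⟨n * K ^ 2, by positivity, fun x h1 h2 => ?_⟩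
  have hb := hL.le_mul_dist x 0
  simp only [dist_zero_right, map_zero] at hb
  have hLx : L x = (bearingMap E pstar x, 0, 0) := by
    refine Prod.ext rfl (Prod.ext ?_ ?_)
    · exact (hL1 x).trans h1
    · exact (hL2 x).trans h2
  have : ‖L x‖ = ‖bearingMap E pstar x‖ := by
    rw [hLx]; simp [Prod.norm_def]
  rw [this] at hb
  calc ∑ i, ‖x i‖ ^ 2 ≤ ∑ i : Fin n, (K * ‖bearingMap E pstar x‖) ^ 2 := by
        refine Finset.sum_le_sum fun i _ => ?_
        have := (norm_le_pi_norm x i).trans hb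
        gcongr
    _ = _ := by simp; ring

set_option maxHeartbeats 4000000

/-- Almost global exponential stability: if the target formation `G(p*)`
is infinitesimally bearing rigid with bearings `g*`, and `p(t)` solves
`ṗ = (H ⊗ I_d)ᵀ diag(P_{g_k(t)}) g*` on `[0, ∞)` with the same centroid and scale as `p*`
and `p(0)` is not the point reflection `-p* + 2(1_n ⊗ p̄*)`, then `‖p(t) - p*‖ ≤ C e^{-λt}`
for some `C ≥ 0`, `λ > 0`; in particular all bearings `g_k(t) → g*_k`. -/
theorem almost_global_exponential_stability {d n m : ℕ} (hd : 2 ≤ d) (hn : 2 ≤ n)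
    (E : Fin m → Fin n × Fin n)
    (pstar : Fin n → EuclideanSpace ℝ (Fin d))
    (hpstar : ∀ k, pstar (E k).1 ≠ pstar (E k).2)
    (gstar : Fin m → EuclideanSpace ℝ (Fin d))
    (hgstar : ∀ k, gstar k =
      ‖pstar (E k).2 - pstar (E k).1‖⁻¹ • (pstar (E k).2 - pstar (E k).1))
    (hibr : LinearMap.ker (bearingMap E pstar) =
      LinearMap.range (constLM d n) ⊔ Submodule.span ℝ {pstar})
    (p : ℝ → Fin n → EuclideanSpace ℝ (Fin d))
    (hderiv : ∀ t ∈ Set.Ici (0 : ℝ),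
      HasDerivWithinAt p (bearingCtrl E gstar (p t)) (Set.Ici 0) t)
    (hne : ∀ t ∈ Set.Ici (0 : ℝ), ∀ k, p t (E k).1 ≠ p t (E k).2)
    (hcent : (n : ℝ)⁻¹ • ∑ i, p 0 i = (n : ℝ)⁻¹ • ∑ i, pstar i)
    (hscale : Real.sqrt ((n : ℝ)⁻¹ * ∑ i, ‖p 0 i - (n : ℝ)⁻¹ • ∑ l, p 0 l‖ ^ 2) =
      Real.sqrt ((n : ℝ)⁻¹ * ∑ i, ‖pstar i - (n : ℝ)⁻¹ • ∑ l, pstar l‖ ^ 2))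
    (hinit : p 0 ≠ fun i => -pstar i + (2 : ℝ) • ((n : ℝ)⁻¹ • ∑ l, pstar l)) :
    (∃ C ≥ (0 : ℝ), ∃ lam > (0 : ℝ), ∀ t ≥ (0 : ℝ),
        Real.sqrt (∑ i, ‖p t i - pstar i‖ ^ 2) ≤ C * Real.exp (-lam * t)) ∧
    ∀ k, Filter.Tendsto
      (fun t => ‖p t (E k).2 - p t (E k).1‖⁻¹ • (p t (E k).2 - p t (E k).1))
      Filter.atTop (nhds (gstar k)) := by
  classical
  have hn0 : (n : ℝ) ≠ 0 := by positivity
  set c : EuclideanSpace ℝ (Fin d) := (n : ℝ)⁻¹ • ∑ l, pstar l with hcdef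
  have hsumc : ∀ q : Fin n → EuclideanSpace ℝ (Fin d), ∑ i, (q i - c) = ∑ i, q i - (n : ℝ) • c := by
    intro q
    simp [Finset.sum_sub_distrib, Nat.cast_smul_eq_nsmul]
  have hnc : (n : ℝ) • c = ∑ l, pstar l := by
    rw [hcdef, smul_smul, mul_inv_cancel₀ hn0, one_smul]
  have hr0 : ∑ i, (pstar i - c) = 0 := by rw [hsumc, hnc, sub_self]
  set S : ℝ := ∑ i, ‖pstar i - c‖ ^ 2 with hSdef
  have hS0 : ∑ i, ‖p 0 i - c‖ ^ 2 = S := by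
    rw [hcent] at hscale
    rw [Real.sqrt_inj (by positivity) (by positivity)] at hscale
    exact mul_left_cancel₀ (inv_ne_zero hn0) hscale
  have hSpos : 0 < S := by
    refine lt_of_le_of_ne (by positivity) fun h => hinit ?_
    have z : ∀ q : Fin n → EuclideanSpace ℝ (Fin d), ∑ i, ‖q i - c‖ ^ 2 = 0 → ∀ i, q i = c := by
      intro q hq i
      have := (Finset.sum_eq_zero_iff_of_nonneg (fun i _ => by positivity)).mp hq i
        (Finset.mem_univ i)
      simpa [sub_eq_zero] using this
    have z1 := z pstar h.symm
    have z2 := z (p 0) (hS0.trans h.symm)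
    funext i
    rw [z1, z2, two_smul]; abel
  have hpi : ∀ i, ∀ t ∈ Set.Ici (0 : ℝ),
      HasDerivWithinAt (fun s => p s i) (bearingCtrl E gstar (p t) i) (Set.Ici 0) t :=
    fun i t ht => (hasDerivWithinAt_pi.mp (hderiv t ht)) i
  -- centroid
  have hcen : ∀ t ∈ Set.Ici (0 : ℝ), ∑ i, (p t i - c) = 0 := by
    intro t ht
    have hd0 : ∀ t ∈ Set.Ici (0 : ℝ),
        HasDerivWithinAt (fun s => ∑ i, p s i) 0 (Set.Ici 0) t := by
      intro t ht
      have := HasDerivWithinAt.fun_sum (u := Finset.univ) (fun i _ => hpi i t ht)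
      rwa [sum_ctrl] at this
    have := constant_of_has_deriv_right_zero (a := 0) (b := t)
      (fun s hs => (hd0 s hs.1).continuousWithinAt.mono (fun r hr => hr.1))
      (fun s hs => (hd0 s hs.1).mono (Set.Ici_subset_Ici.mpr hs.1)) t ⟨ht, le_rfl⟩
    rw [hsumc, this]
    have h2 : ∑ i, p 0 i = (n : ℝ) • c := by
      rw [← hcent, smul_smul, mul_inv_cancel₀ hn0, one_smul]
    rw [h2, sub_self]
  have hsq : ∀ y : Fin n → EuclideanSpace ℝ (Fin d), ∀ t ∈ Set.Ici (0 : ℝ),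
      HasDerivWithinAt (fun s => ∑ i, ‖p s i - y i‖ ^ 2)
        (2 * ∑ k, ⟪(p t (E k).2 - y (E k).2) - (p t (E k).1 - y (E k).1),
          projL (p t (E k).2 - p t (E k).1) (gstar k)⟫_ℝ) (Set.Ici 0) t := by
    intro y t ht
    have := HasDerivWithinAt.fun_sum (u := Finset.univ)
      (fun i _ => ((hpi i t ht).sub_const (y i)).norm_sq)
    rw [← Finset.mul_sum, sum_inner_ctrl E gstar (p t) (fun i => p t i - y i)] at this
    exact this
  have hene : ∀ t ∈ Set.Ici (0 : ℝ), ∀ k, p t (E k).2 - p t (E k).1 ≠ 0 :=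
    fun t ht k => sub_ne_zero.mpr (hne t ht k).symm
  have hfne : ∀ k, pstar (E k).2 - pstar (E k).1 ≠ 0 :=
    fun k => sub_ne_zero.mpr (hpstar k).symm
  -- scale
  have hsc : ∀ t ∈ Set.Ici (0 : ℝ), ∑ i, ‖p t i - c‖ ^ 2 = S := by
    intro t ht
    have hd0 : ∀ t ∈ Set.Ici (0 : ℝ),
        HasDerivWithinAt (fun s => ∑ i, ‖p s i - c‖ ^ 2) 0 (Set.Ici 0) t := by
      intro t ht
      have := hsq (fun _ => c) t ht
      simpa only [sub_sub_sub_cancel_right, inner_projL_self _ _ (hene t ht _),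
        Finset.sum_const_zero, mul_zero] using this
    have := constant_of_has_deriv_right_zero (a := 0) (b := t)
      (fun s hs => (hd0 s hs.1).continuousWithinAt.mono (fun r hr => hr.1))
      (fun s hs => (hd0 s hs.1).mono (Set.Ici_subset_Ici.mpr hs.1)) t ⟨ht, le_rfl⟩
    rw [this, hS0]
  -- Lyapunov function
  set D : ℝ → ℝ := fun s => ∑ i, ‖p s i - pstar i‖ ^ 2 with hD
  set T : ℝ → ℝ := fun t => ∑ k, ⟪pstar (E k).2 - pstar (E k).1,
    projL (p t (E k).2 - p t (E k).1) (gstar k)⟫_ℝ with hT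
  have hDT : ∀ t ∈ Set.Ici (0 : ℝ), HasDerivWithinAt D (-2 * T t) (Set.Ici 0) t := by
    intro t ht
    have := hsq pstar t ht
    convert this using 1
    rw [hT, neg_mul, ← mul_neg, ← Finset.sum_neg_distrib]
    congr 1
    refine Finset.sum_congr rfl fun k _ => ?_
    rw [sub_sub_sub_comm, inner_sub_left (p t (E k).2 - p t (E k).1), inner_projL_self _ _ (hene t ht k), zero_sub]
  have hTk : ∀ t ∈ Set.Ici (0 : ℝ), ∀ k, 0 ≤ ⟪pstar (E k).2 - pstar (E k).1,
      projL (p t (E k).2 - p t (E k).1) (gstar k)⟫_ℝ := by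
    intro t ht k
    rw [hgstar]
    exact inner_projL_nonneg _ _ (hene t ht k)
  have hT0 : ∀ t ∈ Set.Ici (0 : ℝ), 0 ≤ T t := fun t ht =>
    Finset.sum_nonneg fun k _ => hTk t ht k
  have hDle : ∀ t ∈ Set.Ici (0 : ℝ), D t ≤ D 0 := by
    intro t ht
    have := decay 0 hDT (fun t ht => by have := hT0 t ht; linarith) t ht
    simpa using this
  -- inner product
  set A : ℝ → ℝ := fun t => ∑ i, ⟪pstar i - c, p t i - c⟫_ℝ with hA
  have hDA : ∀ t ∈ Set.Ici (0 : ℝ), D t = 2 * S - 2 * A t := by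
    intro t ht
    have h1 := hsc t ht
    calc D t = ∑ i, (‖p t i - c‖ ^ 2 + ‖pstar i - c‖ ^ 2 - 2 * ⟪pstar i - c, p t i - c⟫_ℝ) := by
          refine Finset.sum_congr rfl fun i _ => ?_
          rw [← sub_sub_sub_cancel_right (p t i) (pstar i) c, norm_sub_sq_real, real_inner_comm]
          ring
      _ = _ := by
          rw [Finset.sum_sub_distrib, Finset.sum_add_distrib, h1, ← Finset.mul_sum]; ring
  have hη : 0 < 4 * S - D 0 := by
    have h0 : (0 : ℝ) ∈ Set.Ici (0 : ℝ) := Set.self_mem_Ici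
    have hP : ∑ i, ‖(p 0 i - c) + (pstar i - c)‖ ^ 2 = 2 * S + 2 * A 0 := by
      calc _ = ∑ i, (‖p 0 i - c‖ ^ 2 + ‖pstar i - c‖ ^ 2 + 2 * ⟪pstar i - c, p 0 i - c⟫_ℝ) := by
            refine Finset.sum_congr rfl fun i _ => ?_
            rw [norm_add_sq_real, real_inner_comm]
            ring
        _ = _ := by
          rw [Finset.sum_add_distrib, Finset.sum_add_distrib, hS0, ← Finset.mul_sum]; ring
    have e : 4 * S - D 0 = ∑ i, ‖(p 0 i - c) + (pstar i - c)‖ ^ 2 := by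
      rw [hP, hDA 0 h0]; ring
    rw [e]
    refine lt_of_le_of_ne (by positivity) fun h => hinit ?_
    funext i
    have := (Finset.sum_eq_zero_iff_of_nonneg (fun i _ => by positivity)).mp h.symm i
        (Finset.mem_univ i)
    have h3 : (p 0 i - c) + (pstar i - c) = 0 := by simpa using this
    rw [two_smul, ← sub_eq_zero, ← h3]; abel
  obtain ⟨K, hK, hco⟩ := coercive hn E pstar c hr0 hSpos hibr
  -- bound on the rigidity map
  set W : ℝ := ∑ k, (‖pstar (E k).2 - pstar (E k).1‖ ^ 3)⁻¹ with hW
  have hW0 : 0 ≤ W := by positivity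
  have hR : ∀ t ∈ Set.Ici (0 : ℝ), ‖bearingMap E pstar (p t)‖ ^ 2 ≤ W * (4 * S) * T t := by
    intro t ht
    have hTt := hT0 t ht
    have : ‖bearingMap E pstar (p t)‖ ≤ Real.sqrt (W * (4 * S) * T t) := by
      rw [pi_norm_le_iff_of_nonneg (Real.sqrt_nonneg _)]
      intro k
      apply Real.le_sqrt_of_sq_le
      have e1 : bearingMap E pstar (p t) k = ‖pstar (E k).2 - pstar (E k).1‖⁻¹ •
          projL (pstar (E k).2 - pstar (E k).1) (p t (E k).2 - p t (E k).1) := by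
        simp [bearingMap]
      rw [e1, edge_identity _ _ (hene t ht k) (hfne k), ← hgstar]
      have b1 : (‖pstar (E k).2 - pstar (E k).1‖ ^ 3)⁻¹ ≤ W :=
        Finset.single_le_sum (f := fun k => (‖pstar (E k).2 - pstar (E k).1‖ ^ 3)⁻¹)
          (fun k _ => by positivity) (Finset.mem_univ k)
      have b2 : ⟪pstar (E k).2 - pstar (E k).1,
          projL (p t (E k).2 - p t (E k).1) (gstar k)⟫_ℝ ≤ T t :=
        Finset.single_le_sum (f := fun k => ⟪pstar (E k).2 - pstar (E k).1,
          projL (p t (E k).2 - p t (E k).1) (gstar k)⟫_ℝ)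
          (fun k _ => hTk t ht k) (Finset.mem_univ k)
      have b4 : ∀ i, ‖p t i - c‖ ^ 2 ≤ S := fun i => by
        rw [← hsc t ht]
        exact Finset.single_le_sum (f := fun i => ‖p t i - c‖ ^ 2)
          (fun k _ => by positivity) (Finset.mem_univ i)
      have b3 : ‖p t (E k).2 - p t (E k).1‖ ^ 2 ≤ 4 * S := by
        have q := norm_sub_le (p t (E k).2 - c) (p t (E k).1 - c)
        rw [sub_sub_sub_cancel_right] at q
        have q2 := pow_le_pow_left₀ (norm_nonneg _) q 2
        have := b4 (E k).1
        have := b4 (E k).2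
        nlinarith [sq_nonneg (‖p t (E k).2 - c‖ - ‖p t (E k).1 - c‖)]
      have := hTk t ht k
      gcongr
    calc _ ≤ Real.sqrt (W * (4 * S) * T t) ^ 2 := by gcongr
      _ = _ := Real.sq_sqrt (by positivity)
  have hbp : bearingMap E pstar pstar = 0 := by
    have : pstar ∈ LinearMap.ker (bearingMap E pstar) := by
      rw [hibr]
      exact Submodule.mem_sup_right (Submodule.mem_span_singleton_self _)
    exact this
  have hbc : bearingMap E pstar (fun _ => c) = 0 := by
    have : (fun _ => c) ∈ LinearMap.ker (bearingMap E pstar) := by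
      rw [hibr]
      exact Submodule.mem_sup_left ⟨c, rfl⟩
    exact this
  set M : ℝ := K * (W * (4 * S)) + 1 with hM
  have hMpos : 0 < M := by positivity
  have hmain : ∀ t ∈ Set.Ici (0 : ℝ), D t * (4 * S - D 0) ≤ 4 * S * (M * T t) := by
    intro t ht
    set a := A t / S with ha
    have hAS : A t = a * S := by rw [ha]; field_simp
    have hx := hco (fun i => (p t i - c) - a • (pstar i - c))
      (by rw [Finset.sum_sub_distrib, ← Finset.smul_sum, hr0, hcen t ht]; simp)
      (by
        simp only [inner_sub_right _ (p t _ - c), real_inner_smul_right, real_inner_self_eq_norm_sq,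
          Finset.sum_sub_distrib, ← Finset.mul_sum]
        change A t - a * S = 0
        rw [hAS, sub_self])
    have e1 : (fun i => (p t i - c) - a • (pstar i - c)) =
        p t - (fun _ => c) - a • (pstar - fun _ => c) := by
      funext i; simp
    have e2 : bearingMap E pstar (fun i => (p t i - c) - a • (pstar i - c)) =
        bearingMap E pstar (p t) := by
      rw [e1, map_sub, map_sub, map_smul, map_sub, hbp, hbc]; simp
    have e3 : ∑ i, ‖(p t i - c) - a • (pstar i - c)‖ ^ 2 = S - a ^ 2 * S := by
      calc _ = ∑ i, (‖p t i - c‖ ^ 2 + a ^ 2 * ‖pstar i - c‖ ^ 2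
              - (2 * a) * ⟪pstar i - c, p t i - c⟫_ℝ) := by
            refine Finset.sum_congr rfl fun i _ => ?_
            rw [norm_sub_sq_real, real_inner_smul_right, real_inner_comm, norm_smul, mul_pow,
              Real.norm_eq_abs, sq_abs]
            ring
        _ = S + a ^ 2 * S - 2 * a * A t := by
            rw [Finset.sum_sub_distrib, Finset.sum_add_distrib, hsc t ht, ← Finset.mul_sum,
              ← Finset.mul_sum]
        _ = _ := by rw [hAS]; ring
    rw [e2, e3] at hx
    have h1 : S - a ^ 2 * S ≤ M * T t := by
      have := mul_le_mul_of_nonneg_left (hR t ht) hK.le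
      have := hT0 t ht
      rw [hM]; nlinarith
    have h2 : D t = 2 * S * (1 - a) := by rw [hDA t ht, hAS]; ring
    have h3 : 0 ≤ D t := by simp only [hD]; positivity
    calc D t * (4 * S - D 0) ≤ D t * (4 * S - D t) := by
          have := hDle t ht
          gcongr
      _ = 4 * S * (S - a ^ 2 * S) := by rw [h2]; ring
      _ ≤ _ := by gcongr
  set κ : ℝ := (4 * S - D 0) / (2 * S * M) with hκ
  have hκpos : 0 < κ := by positivity
  have hdec := decay κ hDT (fun t ht => by
    have h1 := hmain t ht
    have : κ * D t ≤ 2 * T t := by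
      rw [hκ, div_mul_eq_mul_div, div_le_iff₀ (by positivity)]
      linarith
    linarith)
  have hD0 : 0 ≤ D 0 := by simp only [hD]; positivity
  have hexp : ∀ t ≥ (0 : ℝ), Real.sqrt (∑ i, ‖p t i - pstar i‖ ^ 2) ≤
      Real.sqrt (D 0) * Real.exp (-(κ / 2) * t) := by
    intro t ht
    have := hdec t ht
    apply Real.sqrt_le_iff.mpr
    refine ⟨by positivity, ?_⟩
    rw [mul_pow, Real.sq_sqrt hD0, ← Real.exp_nat_mul]
    convert this using 3
    push_cast; ring
  refine ⟨⟨Real.sqrt (D 0), Real.sqrt_nonneg _, κ / 2, by positivity, hexp⟩, ?_⟩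
  have hlim : ∀ i, Filter.Tendsto (fun t => p t i) Filter.atTop (nhds (pstar i)) := by
    intro i
    rw [tendsto_iff_norm_sub_tendsto_zero]
    have hz : Filter.Tendsto (fun t => Real.sqrt (D 0) * Real.exp (-(κ / 2) * t))
        Filter.atTop (nhds 0) := by
      have h1 : Filter.Tendsto (fun t : ℝ => -(κ / 2) * t) Filter.atTop Filter.atBot :=
        Filter.tendsto_id.const_mul_atTop_of_neg (by linarith)
      simpa using (Real.tendsto_exp_atBot.comp h1).const_mul (Real.sqrt (D 0))
    refine squeeze_zero' (Filter.Eventually.of_forall fun t => norm_nonneg _) ?_ hz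
    filter_upwards [Filter.eventually_ge_atTop 0] with t ht
    refine le_trans (Real.le_sqrt_of_sq_le ?_) (hexp t ht)
    exact Finset.single_le_sum (f := fun i => ‖p t i - pstar i‖ ^ 2)
          (fun k _ => by positivity) (Finset.mem_univ i)
  intro k
  have he := (hlim (E k).2).sub (hlim (E k).1)
  rw [hgstar]
  exact (he.norm.inv₀ (norm_ne_zero_iff.mpr (hfne k))).smul he
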